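/- arXiv:2401.03613 — 2 statements merged into one kernel-verified Lean document; each statement's English description precedes it below -/
import Mathlib

section
/- Let w, c_f > 0 and q ∈ [0,1), and define v₀(Δ) = 0 and v_m(Δ) = min( w·Δ + q·v_{m−1}(Δ+1), c_f + q·v_{m−1}(1) ) for m ≥ 1, Δ ∈ ℕ. Then for every m ≥ 1 and every Δ ∈ ℕ with w·Δ > c_f, the update branch attains the minimum: c_f + q·v_{m−1}(1) ≤ w·Δ + q·v_{m−1}(Δ+1). In particular, the age thresholds of the finite-horizon optimal push policies are uniformly bounded by c_f/w. -/
/-- Value-iteration iterates for the discounted push-based caching problem: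
`pushValue w cf q m Δ` is the `m`-step value at age `Δ`, where `w = β·p·c_a` is the
per-step expected aging cost rate, `cf` the fetching cost and `q` the discount factor. -/
noncomputable def pushValue (w cf q : ℝ) : ℕ → ℕ → ℝ
  | 0, _ => 0
  | m + 1, Δ =>
      min (w * (Δ : ℝ) + q * pushValue w cf q m (Δ + 1))
          (cf + q * pushValue w cf q m 1)

/-- For nonnegative aging rate and discount factor, every value iterate is nondecreasing
in the age. -/
theorem pushValue_monotone {w q : ℝ} (cf : ℝ) (hw : 0 ≤ w) (hq : 0 ≤ q) (m : ℕ) :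
    Monotone (pushValue w cf q m) := by
  induction m with
  | zero => exact fun a b _ => by simp [pushValue]
  | succ m ih =>
    intro a b hab
    have hstep := ih (Nat.succ_le_succ hab)
    simp only [pushValue]
    gcongr

/-- Whenever `w·Δ > c_f`, the update branch attains the minimum in the value
iteration; hence the finite-horizon age thresholds are uniformly bounded by `c_f/w`. -/
theorem pushValue_update_optimal_above_bound (w cf q : ℝ) (hw : 0 < w) (hcf : 0 < cf)
    (hq0 : 0 ≤ q) (hq1 : q < 1) :
    ∀ m : ℕ, 1 ≤ m → ∀ Δ : ℕ, cf < w * (Δ : ℝ) →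
      cf + q * pushValue w cf q (m - 1) 1 ≤
        w * (Δ : ℝ) + q * pushValue w cf q (m - 1) (Δ + 1) := by
  intro m _ Δ hΔ
  have hmono : pushValue w cf q (m - 1) 1 ≤ pushValue w cf q (m - 1) (Δ + 1) :=
    pushValue_monotone cf hw.le hq0 (m - 1) (Nat.le_add_left 1 Δ)
  gcongr
end

section
/- Let λ, c_a, c_f > 0 and γ ∈ [0,1), and define v₀(s) = 0 and v_m(s) = min( λ·c_a·s + γ·v_{m−1}(s+1), c_f + γ·v_{m−1}(1) ) for m ≥ 1, s ≥ 0. Then for every m ≥ 1 and every s > c_f/(λ·c_a), the fetch branch attains the minimum: c_f + γ·v_{m−1}(1) ≤ λ·c_a·s + γ·v_{m−1}(s+1). In particular, the elapsed-time thresholds τ_m of the finite-horizon optimal pull policies satisfy τ_m ≤ c_f/(λ·c_a) for all m. -/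
/-- Value-iteration iterates for the discounted pull-based caching problem restricted to
request epochs: `pullValue lam ca cf γ m s` is the `m`-step value when the elapsed time
since the last cache update is `s`, with update rate `lam`, aging cost `ca`, fetching
cost `cf` and discount factor `γ`. -/
noncomputable def pullValue (lam ca cf γ : ℝ) : ℕ → ℝ → ℝ
  | 0, _ => 0
  | m + 1, s =>
      min (lam * ca * s + γ * pullValue lam ca cf γ m (s + 1))
          (cf + γ * pullValue lam ca cf γ m 1)

theorem pullValue_monotone {lam ca cf γ : ℝ} (hc : 0 ≤ lam * ca) (hγ : 0 ≤ γ) (m : ℕ) :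
    Monotone (pullValue lam ca cf γ m) := by
  induction m with
  | zero => exact fun _ _ _ => le_rfl
  | succ m ih =>
    intro s t hst
    have hnext : pullValue lam ca cf γ m (s + 1) ≤ pullValue lam ca cf γ m (t + 1) :=
      ih (by linarith)
    simp only [pullValue]
    gcongr

/-- For every `s > c_f/(λ·c_a)`, the fetch branch attains the minimum in the value
iteration; hence the finite-horizon elapsed-time thresholds satisfy
`τ_m ≤ c_f/(λ·c_a)` for all `m`. -/
theorem pullValue_fetch_optimal_above_bound (lam ca cf γ : ℝ) (hlam : 0 < lam)
    (hca : 0 < ca) (hcf : 0 < cf) (hγ0 : 0 ≤ γ) (hγ1 : γ < 1) :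
    ∀ m : ℕ, 1 ≤ m → ∀ s : ℝ, cf / (lam * ca) < s →
      cf + γ * pullValue lam ca cf γ (m - 1) 1 ≤
        lam * ca * s + γ * pullValue lam ca cf γ (m - 1) (s + 1) := by
  intro m _ s hs
  have hc : 0 < lam * ca := mul_pos hlam hca
  have hs0 : 0 < s := (div_pos hcf hc).trans hs
  have hage : cf ≤ lam * ca * s := ((div_lt_iff₀' hc).mp hs).le
  have hmono := pullValue_monotone (cf := cf) hc.le hγ0 (m - 1)
    (show (1 : ℝ) ≤ s + 1 by linarith)
  gcongr
end
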